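/- arXiv:2502.05636 — 2 statements merged into one kernel-verified Lean document; each statement's English description precedes it below -/
import Mathlib

section
/- Let M be a nonempty closed convex subset of a Banach space E, and let A, B : M → E be maps such that (i) A x + B y ∈ M for all x, y ∈ M; (ii) A is continuous and the image A(M) is contained in a compact subset of E; (iii) B satisfies ‖B x − B y‖ ≤ κ ‖x − y‖ for all x, y ∈ M with a constant κ < 1. Then there exists y ∈ M such that A y + B y = y. -/
namespace KrasFP

def Dom {I V : Type*} (r : I → V → ℤ) (S : Finset V) : Prop :=
  ∀ y, ∃ i, ∀ v ∈ S, r i y ≤ r i v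

open Classical in
noncomputable def amax {I V : Type*} [Fintype V] (r : I → V → ℤ) (m : I → V) (i : I) : Finset V :=
  Finset.univ.filter fun v => (∀ l, l ≠ i → r l (m l) < r l v) ∧
    ∀ y, (∀ l, l ≠ i → r l (m l) < r l y) → r i y ≤ r i v

theorem amax_card {I V : Type*} [Fintype V] (r : I → V → ℤ) (hr : ∀ i, Function.Injective (r i))
    (m : I → V) (i : I) (hne : ∃ v, ∀ l, l ≠ i → r l (m l) < r l v) :
    (amax r m i).card = 1 := by
  classical
  rw [Finset.card_eq_one]
  obtain ⟨v, hv⟩ := hne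
  obtain ⟨w, hw, hmax⟩ := Finset.exists_max_image
    (Finset.univ.filter fun v => ∀ l, l ≠ i → r l (m l) < r l v) (r i) ⟨v, by simpa using hv⟩
  simp only [Finset.mem_filter, Finset.mem_univ, true_and] at hw hmax
  refine ⟨w, ?_⟩
  ext u
  simp only [amax, Finset.mem_filter, Finset.mem_univ, true_and, Finset.mem_singleton]
  constructor
  · rintro ⟨h1, h2⟩
    exact hr i (le_antisymm (hmax u h1) (h2 w hw))
  · rintro rfl
    exact ⟨hw, hmax⟩

theorem facet {I V : Type*} [Fintype I] [Fintype V] [DecidableEq I] [DecidableEq V]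
    (r : I → V → ℤ) (hr : ∀ i, Function.Injective (r i)) (F : Finset V)
    (hF : F.card + 1 = Fintype.card I) (hD : Dom r F) (m : I → V) (hm : ∀ i, m i ∈ F)
    (hmm : ∀ i, ∀ v ∈ F, r i (m i) ≤ r i v) (i j : I) (hij : i ≠ j) (hmij : m i = m j) (v : V) :
    (v ∉ F ∧ Dom r (insert v F)) ↔ v ∈ amax r m i ∪ amax r m j := by
  have hsurj : ∀ u ∈ F, ∃ l, m l = u := by
    intro u hu
    obtain ⟨l, hl⟩ := hD u
    exact ⟨l, hr l (le_antisymm (hmm l u hu) (hl _ (hm l)))⟩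
  have back : ∀ i j : I, i ≠ j → m i = m j → v ∈ amax r m i → v ∉ F ∧ Dom r (insert v F) := by
    intro i j hij hmij hv
    simp only [amax, Finset.mem_filter, Finset.mem_univ, true_and] at hv
    obtain ⟨h1, h2⟩ := hv
    constructor
    · intro hvF
      obtain ⟨l, rfl⟩ := hsurj v hvF
      by_cases hl : l = i
      · subst hl
        have := h1 j hij.symm
        rw [hmij] at this
        exact lt_irrefl _ this
      · exact lt_irrefl _ (h1 l hl)
    · intro y
      by_contra hcon
      push Not at hcon
      have hy : ∀ l, l ≠ i → r l (m l) < r l y := by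
        intro l hl
        obtain ⟨u, hu, huy⟩ := hcon l
        rcases Finset.mem_insert.1 hu with rfl | hu
        · exact (h1 l hl).trans huy
        · exact (hmm l u hu).trans_lt huy
      have := h2 y hy
      obtain ⟨u, hu, huy⟩ := hcon i
      rcases Finset.mem_insert.1 hu with rfl | hu
      · omega
      · obtain ⟨l, hl⟩ := hD y
        have h3 := hl _ (hm l)
        by_cases hli : l = i
        · subst hli
          have := hmm l u hu
          omega
        · have := hy l hli
          omega
  constructor
  · rintro ⟨hvF, hdom⟩
    -- orders in which v is minimal
    let K : Finset I := Finset.univ.filter fun l => r l v < r l (m l)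
    have hne : ∀ l, l ∉ K → r l (m l) < r l v := by
      intro l hl
      simp only [K, Finset.mem_filter, Finset.mem_univ, true_and, not_lt] at hl
      refine lt_of_le_of_ne hl fun h => hvF ?_
      rw [← hr l h]; exact hm l
    have hKne : K.Nonempty := by
      obtain ⟨l, hl⟩ := hdom v
      refine ⟨l, ?_⟩
      by_contra hlK
      have := hne l hlK
      have := hl (m l) (Finset.mem_insert_of_mem (hm l))
      omega
    have hsub : F ⊆ Kᶜ.image m := by
      intro u hu
      obtain ⟨l, hl⟩ := hdom u
      have hml : m l = u :=
        hr l (le_antisymm (hmm l u hu) (hl _ (Finset.mem_insert_of_mem (hm l))))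
      refine Finset.mem_image.2 ⟨l, ?_, hml⟩
      rw [Finset.mem_compl]
      intro hlK
      simp only [K, Finset.mem_filter, Finset.mem_univ, true_and] at hlK
      have := hl v (Finset.mem_insert_self _ _)
      rw [hml] at hlK
      omega
    have hc1 := Finset.card_le_card hsub
    have hc2 : (Kᶜ.image m).card ≤ Kᶜ.card := Finset.card_image_le
    have hc3 := Finset.card_compl K
    have hc4 := hKne.card_pos
    have hc5 : K.card ≤ Fintype.card I := Finset.card_le_univ K
    have hinj : Set.InjOn m (Kᶜ : Finset I) := Finset.card_image_iff.1 (by omega)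
    obtain ⟨k, hk⟩ : ∃ k, K = {k} := Finset.card_eq_one.1 (by omega)
    have hkij : k = i ∨ k = j := by
      by_contra hcon
      push Not at hcon
      exact hij (hinj (by simp [hk, hcon.1.symm]) (by simp [hk, hcon.2.symm]) hmij)
    have hvk : v ∈ amax r m k := by
      simp only [amax, Finset.mem_filter, Finset.mem_univ, true_and]
      refine ⟨fun l hl => hne l (by simpa [hk] using hl), fun y hy => ?_⟩
      obtain ⟨l, hl⟩ := hdom y
      by_cases hlk : l = k
      · subst hlk
        exact hl v (Finset.mem_insert_self _ _)
      · have := hy l hlk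
        have := hl (m l) (Finset.mem_insert_of_mem (hm l))
        omega
    rcases hkij with rfl | rfl
    · exact Finset.mem_union_left _ hvk
    · exact Finset.mem_union_right _ hvk
  · intro h
    rcases Finset.mem_union.1 h with h | h
    · exact back i j hij hmij h
    · exact back j i hij.symm hmij.symm h

theorem facet_card {I V : Type*} [Fintype I] [Fintype V] [DecidableEq I] [DecidableEq V]
    (r : I → V → ℤ) (hr : ∀ i, Function.Injective (r i)) (F : Finset V)
    (hF : F.card + 1 = Fintype.card I) (hD : Dom r F) (m : I → V) (hm : ∀ i, m i ∈ F)
    (hmm : ∀ i, ∀ v ∈ F, r i (m i) ≤ r i v) (i j : I) (hij : i ≠ j) (hmij : m i = m j)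
    (T : Finset V) (hT : ∀ v, v ∈ T ↔ v ∉ F ∧ Dom r (insert v F)) :
    T.card = (amax r m i).card + (amax r m j).card := by
  have : T = amax r m i ∪ amax r m j := by
    ext v
    rw [hT, facet r hr F hF hD m hm hmm i j hij hmij v]
  rw [this, Finset.card_union_of_disjoint]
  rw [Finset.disjoint_left]
  intro v h1 h2
  simp only [amax, Finset.mem_filter, Finset.mem_univ, true_and] at h1 h2
  obtain ⟨l, hl⟩ := hD v
  have h3 := hl _ (hm l)
  by_cases hli : l = i
  · have := h2.1 l (hli ▸ hij)
    omega
  · have := h1.1 l hli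
    omega

theorem room_even {I V : Type*} [Fintype I] [DecidableEq I] [DecidableEq V]
    (c : V → I) (i0 : I) (S : Finset V) (hS : S.card = Fintype.card I)
    (hne : S.image c ≠ Finset.univ) :
    Even (S.filter fun v => (S.erase v).image c = Finset.univ.erase i0).card := by
  rcases Finset.eq_empty_or_nonempty
    (S.filter fun v => (S.erase v).image c = Finset.univ.erase i0) with h | ⟨v, hv⟩
  · rw [h]; simp
  rw [Finset.mem_filter] at hv
  obtain ⟨hvS, hv⟩ := hv
  have hins : insert (c v) ((S.erase v).image c) = S.image c := by
    rw [← Finset.image_insert, Finset.insert_erase hvS]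
  have hcv : c v ≠ i0 := by
    intro h
    apply hne
    rw [← hins, hv, h, Finset.insert_erase (Finset.mem_univ _)]
  have hcard : ∀ u ∈ S, (S.erase u).image c = Finset.univ.erase i0 →
      Set.InjOn c (S.erase u : Finset V) := by
    intro u hu h
    apply Finset.card_image_iff.1
    rw [h, Finset.card_erase_of_mem hu, Finset.card_erase_of_mem (Finset.mem_univ _), hS,
      Finset.card_univ]
  obtain ⟨w, hw, hwv⟩ : ∃ w ∈ S.erase v, c w = c v := by
    have : c v ∈ (S.erase v).image c := by rw [hv]; simp [hcv]
    simpa only [Finset.mem_image] using this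
  have hwS := Finset.mem_of_mem_erase hw
  have hwne := Finset.ne_of_mem_erase hw
  have hwim : (S.erase w).image c = Finset.univ.erase i0 := by
    have hins' : insert (c w) ((S.erase w).image c) = S.image c := by
      rw [← Finset.image_insert, Finset.insert_erase hwS]
    have h1 : c w ∈ (S.erase w).image c :=
      Finset.mem_image.2 ⟨v, Finset.mem_erase.2 ⟨hwne.symm, hvS⟩, hwv.symm⟩
    have h2 : c v ∈ (S.erase v).image c := Finset.mem_image.2 ⟨w, hw, hwv⟩
    rw [Finset.insert_eq_of_mem h1] at hins'
    rw [Finset.insert_eq_of_mem h2] at hins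
    rw [hins', ← hins, hv]
  have : (S.filter fun v => (S.erase v).image c = Finset.univ.erase i0) = {v, w} := by
    ext u
    simp only [Finset.mem_filter, Finset.mem_insert, Finset.mem_singleton]
    constructor
    · rintro ⟨huS, hu⟩
      by_contra hcon
      push Not at hcon
      have := hcard u huS hu
        (Finset.mem_coe.2 (Finset.mem_erase.2 ⟨hcon.1.symm, hvS⟩))
        (Finset.mem_coe.2 (Finset.mem_erase.2 ⟨hcon.2.symm, hwS⟩)) hwv.symm
      exact hwne this.symm
    · rintro (rfl | rfl)
      · exact ⟨hvS, hv⟩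
      · exact ⟨hwS, hwim⟩
  rw [this, Finset.card_pair hwne.symm]
  exact even_two

theorem scarf {I V : Type*} [Fintype I] [Fintype V] [Nontrivial I]
    (r : I → V → ℤ) (hr : ∀ i, Function.Injective (r i)) (s : I → V)
    (hmin : ∀ i v, v ≠ s i → r i (s i) < r i v)
    (hsl : ∀ i j v, j ≠ i → v ∉ Set.range s → r i v < r i (s j))
    (c : V → I) (hc : ∀ i, c (s i) = i) :
    ∃ S : Finset V, Dom r S ∧ ∀ i, ∃ v ∈ S, c v = i := by
  classical
  by_contra hcon
  push Not at hcon
  have hcon' : ∀ S : Finset V, Dom r S → S.image c ≠ Finset.univ := by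
    intro S hS h
    obtain ⟨i, hi⟩ := hcon S hS
    have : i ∈ S.image c := by rw [h]; simp
    obtain ⟨v, hv, hvi⟩ := Finset.mem_image.1 this
    exact hi v hv hvi
  obtain ⟨i0, j0, hij0⟩ := exists_pair_ne I
  have hsinj : Function.Injective s := fun a b h => by rw [← hc a, h, hc b]
  let P : Finset (Finset V × V) := Finset.univ.filter fun p =>
    p.2 ∉ p.1 ∧ p.1.card + 1 = Fintype.card I ∧ p.1.image c = Finset.univ.erase i0 ∧
      Dom r (insert p.2 p.1)
  have hPeven : Even P.card := by
    rw [Finset.card_eq_sum_card_fiberwise (f := fun p : Finset V × V => insert p.2 p.1)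
      (t := Finset.univ) (fun _ _ => by simp)]
    apply Finset.even_sum
    intro S _
    by_cases hS : S.card = Fintype.card I ∧ Dom r S
    · have := room_even c i0 S hS.1 (hcon' S hS.2)
      refine (congrArg Even ?_).mp this
      apply Finset.card_bij (fun v _ => (S.erase v, v))
      · intro v hv
        rw [Finset.mem_filter] at hv
        simp only [P, Finset.mem_filter, Finset.mem_univ, true_and, Finset.insert_erase hv.1,
          Finset.card_erase_add_one hv.1]
        exact ⟨⟨by simp, hS.1, hv.2, hS.2⟩, trivial⟩
      · intro a _ b _ h
        exact (Prod.ext_iff.1 h).2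
      · rintro ⟨F, v⟩ h
        simp only [P, Finset.mem_filter, Finset.mem_univ, true_and] at h
        obtain ⟨⟨h1, h2, h3, h4⟩, rfl⟩ := h
        refine ⟨v, ?_, ?_⟩
        · simp [Finset.erase_insert h1, h3]
        · simp [Finset.erase_insert h1]
    · convert Even.zero using 1
      rw [Finset.card_eq_zero, Finset.filter_eq_empty_iff]
      rintro ⟨F, v⟩ h h'
      simp only [P, Finset.mem_filter, Finset.mem_univ, true_and] at h h'
      subst h'
      exact hS ⟨by rw [Finset.card_insert_of_notMem h.1]; exact h.2.1, h.2.2.2⟩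
  let F0 : Finset V := (Finset.univ.erase i0).image s
  have hF0card : F0.card + 1 = Fintype.card I := by
    rw [Finset.card_image_of_injective _ hsinj, Finset.card_erase_add_one (Finset.mem_univ _),
      Finset.card_univ]
  have hF0im : F0.image c = Finset.univ.erase i0 := by
    ext i
    simp [F0, hc]
  have hF0mem : ∀ v, v ∈ F0 ↔ ∃ j, j ≠ i0 ∧ s j = v := by
    intro v; simp [F0]
  have hF0dom : Dom r F0 := by
    intro y
    by_cases hy : y ∈ Set.range s
    · obtain ⟨i, rfl⟩ := hy
      refine ⟨i, fun v _ => ?_⟩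
      by_cases h : v = s i
      · rw [h]
      · exact (hmin i v h).le
    · refine ⟨i0, fun v hv => ?_⟩
      obtain ⟨j, hj, rfl⟩ := (hF0mem v).1 hv
      exact (hsl i0 j y hj hy).le
  have fib : ∀ F : Finset V, (P.filter fun p => p.1 = F).card =
      (Finset.univ.filter fun v => v ∉ F ∧ F.card + 1 = Fintype.card I ∧
        F.image c = Finset.univ.erase i0 ∧ Dom r (insert v F)).card := by
    intro F
    symm
    apply Finset.card_bij (fun v _ => (F, v))
    · intro v hv
      simpa [P] using hv
    · intro a _ b _ h
      exact (Prod.ext_iff.1 h).2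
    · rintro ⟨F', v⟩ h
      simp only [P, Finset.mem_filter, Finset.mem_univ, true_and] at h
      obtain ⟨h, rfl⟩ := h
      exact ⟨v, by simpa using h, rfl⟩
  have exm : ∀ F : Finset V, F.Nonempty → ∃ m : I → V, (∀ i, m i ∈ F) ∧
      ∀ i, ∀ v ∈ F, r i (m i) ≤ r i v := by
    intro F hF
    choose m hm using fun i => Finset.exists_min_image F (r i) hF
    exact ⟨m, fun i => (hm i).1, fun i => (hm i).2⟩
  have hcardI : 1 < Fintype.card I := Fintype.one_lt_card
  have hPodd : Odd P.card := by
    rw [Finset.card_eq_sum_card_fiberwise (f := fun p : Finset V × V => p.1)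
      (t := Finset.univ) (fun _ _ => by simp)]
    rw [← Finset.add_sum_erase _ _ (Finset.mem_univ F0)]
    apply Odd.add_even
    · rw [fib]
      obtain ⟨m, hm, hmm⟩ := exm F0 (Finset.card_pos.1 (by omega))
      have hml : ∀ l, l ≠ i0 → m l = s l := by
        intro l hl
        by_contra h
        have := hmin l _ h
        have := hmm l (s l) ((hF0mem _).2 ⟨l, hl, rfl⟩)
        omega
      obtain ⟨j, hj, hmj⟩ := (hF0mem _).1 (hm i0)
      rw [facet_card r hr F0 hF0card hF0dom m hm hmm i0 j hj.symm (by rw [hml j hj, hmj]) _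
        (fun v => by simp [hF0card, hF0im]),
        amax_card r hr m i0 ⟨s i0, fun l hl => by
          rw [hml l hl]; exact hmin l _ (fun h => hl (hsinj h).symm)⟩]
      have : amax r m j = ∅ := by
        rw [Finset.eq_empty_iff_forall_notMem]
        intro v hv
        simp only [amax, Finset.mem_filter, Finset.mem_univ, true_and] at hv
        have h := hv.1
        have h1 := h i0 hj.symm
        rw [← hmj] at h1
        by_cases hv : v ∈ Set.range s
        · obtain ⟨k, rfl⟩ := hv
          by_cases hk : k = j
          · subst hk; omega
          · by_cases hk0 : k = i0
            · subst hk0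
              have := hmin k (s j) (fun h => hj (hsinj h))
              omega
            · have := h k hk
              rw [hml k hk0] at this
              omega
        · have := hsl i0 j v hj hv
          omega
      rw [this]
      simp
    · apply Finset.even_sum
      intro F hF
      have hFF : F ≠ F0 := Finset.ne_of_mem_erase hF
      rw [fib]
      by_cases hgood : F.card + 1 = Fintype.card I ∧ F.image c = Finset.univ.erase i0 ∧ Dom r F
      · obtain ⟨h1, h2, h3⟩ := hgood
        obtain ⟨m, hm, hmm⟩ := exm F (Finset.card_pos.1 (by omega))
        obtain ⟨i, -, j, -, hij, hmij⟩ := Finset.exists_ne_map_eq_of_card_lt_of_maps_to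
          (s := Finset.univ) (t := F) (f := m) (by rw [Finset.card_univ]; omega)
          (fun l _ => hm l)
        have hnon : ∃ v ∈ F, v ∉ Set.range s := by
          by_contra hall
          push Not at hall
          apply hFF
          apply Finset.eq_of_subset_of_card_le _ (by omega)
          intro v hv
          obtain ⟨k, rfl⟩ := hall v hv
          refine (hF0mem _).2 ⟨k, ?_, rfl⟩
          have : c (s k) ∈ F.image c := Finset.mem_image_of_mem _ hv
          rw [h2, hc] at this
          exact Finset.ne_of_mem_erase this
        obtain ⟨x, hx, hxs⟩ := hnon
        have key : ∀ i, ∃ v, ∀ l, l ≠ i → r l (m l) < r l v := by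
          intro i
          refine ⟨s i, fun l hl => ?_⟩
          exact (hmm l x hx).trans_lt (hsl l i x hl.symm hxs)
        rw [facet_card r hr F h1 h3 m hm hmm i j hij hmij _ (fun v => by simp [h1, h2]),
          amax_card r hr m i (key i), amax_card r hr m j (key j)]
        exact even_two
      · convert Even.zero using 1
        rw [Finset.card_eq_zero, Finset.filter_eq_empty_iff]
        rintro v - ⟨-, h1, h2, h3⟩
        refine hgood ⟨h1, h2, fun y => ?_⟩
        obtain ⟨i, hi⟩ := h3 y
        exact ⟨i, fun v hv => hi v (Finset.mem_insert_of_mem hv)⟩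
  exact (Nat.not_even_iff_odd.2 hPodd) hPeven

theorem grid {I : Type*} [Fintype I] [Nontrivial I] (N : ℕ) (col : (I → ℕ) → I) :
    ∃ z : I → I → ℕ, (∀ i, ∑ k, z i k = N) ∧ (∀ i j k, z i k ≤ z j k + Fintype.card I) ∧
      ∀ i, col (z i) = i ∨ z i i ≤ Fintype.card I := by
  classical
  let X := {a : I → Fin (N + 1) // ∑ k, (a k : ℕ) = N}
  let K : ℕ := Fintype.card X
  let e : X ≃ Fin K := Fintype.equivFin X
  let e' : I ≃ Fin (Fintype.card I) := Fintype.equivFin I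
  let r : I → X ⊕ I → ℤ := fun i v => Sum.elim
    (fun a : X => ((a.1 i : ℕ) : ℤ) * K + ((e a : ℕ) : ℤ))
    (fun j => if j = i then -1 else ((N : ℤ) + 1) * K + ((e' j : ℕ) : ℤ)) v
  have r1 : ∀ i (a : X), r i (Sum.inl a) = ((a.1 i : ℕ) : ℤ) * K + ((e a : ℕ) : ℤ) :=
    fun _ _ => rfl
  have r2 : ∀ i, r i (Sum.inr i) = -1 := fun i => by simp [r]
  have r3 : ∀ i j, j ≠ i → r i (Sum.inr j) = ((N : ℤ) + 1) * K + ((e' j : ℕ) : ℤ) :=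
    fun i j h => by simp [r, h]
  have heK : ∀ a, ((e a : ℕ) : ℤ) < K := fun a => by exact_mod_cast (e a).2
  have hpos : ∀ i (a : X), 0 ≤ r i (Sum.inl a) := fun i a => by rw [r1]; positivity
  have hbig : ∀ i (a : X), r i (Sum.inl a) < ((N : ℤ) + 1) * K := by
    intro i a
    rw [r1]
    have h1 : ((a.1 i : ℕ) : ℤ) ≤ N := by exact_mod_cast Nat.lt_succ_iff.1 (a.1 i).2
    have h2 := heK a
    have h3 : (0 : ℤ) ≤ K := by positivity
    nlinarith
  have hmono : ∀ i (a b : X), r i (Sum.inl a) ≤ r i (Sum.inl b) → (a.1 i : ℕ) ≤ b.1 i := by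
    intro i a b h
    by_contra hlt
    push Not at hlt
    rw [r1, r1] at h
    have h1 : ((b.1 i : ℕ) : ℤ) + 1 ≤ ((a.1 i : ℕ) : ℤ) := by exact_mod_cast hlt
    have h2 := heK b
    have h3 : (0 : ℤ) ≤ ((e a : ℕ) : ℤ) := by positivity
    have h4 : (0 : ℤ) ≤ K := by positivity
    nlinarith
  have hr : ∀ i, Function.Injective (r i) := by
    rintro i (a | j) (b | k) h
    · have h1 := hmono i a b h.le
      have h2 := hmono i b a h.ge
      have h3 : (a.1 i : ℕ) = b.1 i := le_antisymm h1 h2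
      rw [r1, r1, h3] at h
      have h4 : (e a : ℕ) = e b := by exact_mod_cast add_left_cancel h
      rw [e.injective (Fin.ext h4)]
    · exfalso
      have h1 := hpos i a
      have h2 := hbig i a
      by_cases hk : k = i
      · subst hk; rw [r2] at h; omega
      · rw [r3 i k hk] at h; omega
    · exfalso
      have h1 := hpos i b
      have h2 := hbig i b
      by_cases hk : j = i
      · subst hk; rw [r2] at h; omega
      · rw [r3 i j hk] at h; omega
    · have h0 : (0 : ℤ) ≤ ((N : ℤ) + 1) * K := by positivity
      by_cases hj : j = i
      · subst hj
        by_cases hk : k = j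
        · rw [hk]
        · rw [r2, r3 _ _ hk] at h; omega
      · by_cases hk : k = i
        · subst hk
          rw [r2, r3 _ _ hj] at h; omega
        · rw [r3 _ _ hj, r3 _ _ hk] at h
          have h4 : (e' j : ℕ) = e' k := by exact_mod_cast add_left_cancel h
          rw [e'.injective (Fin.ext h4)]
  let c : X ⊕ I → I := Sum.elim (fun a => col fun k => (a.1 k : ℕ)) id
  obtain ⟨S, hdom, hcol⟩ := scarf r hr Sum.inr
    (by
      rintro i (a | j) hv
      · rw [r2]; have := hpos i a; omega
      · have hj : j ≠ i := fun h => hv (by rw [h])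
        rw [r2, r3 _ _ hj]
        have h0 : (0 : ℤ) ≤ ((N : ℤ) + 1) * K := by positivity
        omega)
    (by
      rintro i j (a | k) hj hv
      · rw [r3 _ _ hj]; have := hbig i a; omega
      · exact absurd ⟨k, rfl⟩ hv)
    c (fun i => rfl)
  have hcol' : ∀ i, Sum.inr i ∉ S → ∃ d : X, Sum.inl d ∈ S ∧ col (fun k => (d.1 k : ℕ)) = i := by
    intro i hi
    obtain ⟨v, hv, hvi⟩ := hcol i
    rcases v with a | j
    · exact ⟨a, hv, hvi⟩
    · have : j = i := hvi
      subst this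
      exact absurd hv hi
  have hdom' : ∀ a : X, ∃ i, Sum.inr i ∉ S ∧ ∀ d : X, Sum.inl d ∈ S → (a.1 i : ℕ) ≤ d.1 i := by
    intro a
    obtain ⟨i, hi⟩ := hdom (Sum.inl a)
    refine ⟨i, fun h => ?_, fun d hd => hmono i a d (hi _ hd)⟩
    have h1 := hi _ h
    have h2 := hpos i a
    rw [r2] at h1
    omega
  have mk : ∀ a : I → ℕ, ∑ k, a k = N → ∃ b : X, ∀ k, (b.1 k : ℕ) = a k := by
    intro a ha
    refine ⟨⟨fun k => ⟨a k, ?_⟩, ha⟩, fun k => rfl⟩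
    rw [Nat.lt_succ_iff, ← ha]
    exact Finset.single_le_sum (fun _ _ => Nat.zero_le _) (Finset.mem_univ k)
  let C : Finset I := Finset.univ.filter fun i => Sum.inr i ∉ S
  have hC : ∀ i, i ∈ C ↔ Sum.inr i ∉ S := fun i => by simp [C]
  let D : Finset X := Finset.univ.filter fun d => Sum.inl d ∈ S
  have hD : ∀ d, d ∈ D ↔ Sum.inl d ∈ S := fun d => by simp [D]
  obtain ⟨i1, hi1⟩ : ∃ i, i ∈ C := by
    obtain ⟨i⟩ : Nonempty I := inferInstance
    obtain ⟨b, -⟩ := mk (fun k => if k = i then N else 0) (by simp)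
    obtain ⟨l, hl, -⟩ := hdom' b
    exact ⟨l, (hC l).2 hl⟩
  obtain ⟨d0, hd0, -⟩ := hcol' i1 ((hC i1).1 hi1)
  choose q hqD hq using fun i => Finset.exists_min_image D (fun d => (d.1 i : ℕ))
    ⟨d0, (hD d0).2 hd0⟩
  let μ : I → ℕ := fun i => ((q i).1 i : ℕ)
  have hμ : ∀ i, ∀ d ∈ D, μ i ≤ d.1 i := hq
  have hsum : N < ∑ i ∈ C, (μ i + 1) := by
    by_contra hle
    push Not at hle
    obtain ⟨b, hb⟩ := mk (fun k => (if k ∈ C then μ k + 1 else 0) +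
      if k = i1 then N - ∑ i ∈ C, (μ i + 1) else 0) (by
        rw [Finset.sum_add_distrib, Finset.sum_ite_mem, Finset.univ_inter,
          Finset.sum_ite_eq' Finset.univ i1, if_pos (Finset.mem_univ _)]
        omega)
    obtain ⟨i, hi, hid⟩ := hdom' b
    have h1 := hid (q i) ((hD _).1 (hqD i))
    rw [hb, if_pos ((hC i).2 hi)] at h1
    have : μ i = ((q i).1 i : ℕ) := rfl
    omega
  have hsum2 : N < ∑ i ∈ C, μ i + Fintype.card I := by
    rw [Finset.sum_add_distrib] at hsum
    have : C.card ≤ Fintype.card I := Finset.card_le_univ C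
    simp at hsum
    omega
  have hDsum : ∀ d ∈ D, ∀ k, k ∉ C → (d.1 k : ℕ) ≤ Fintype.card I := by
    intro d hd k hk
    have h1 : ∑ i ∈ insert k C, (d.1 i : ℕ) ≤ ∑ i, (d.1 i : ℕ) :=
      Finset.sum_le_sum_of_subset (Finset.subset_univ _)
    rw [Finset.sum_insert hk, d.2] at h1
    have h2 : ∑ i ∈ C, μ i ≤ ∑ i ∈ C, (d.1 i : ℕ) := Finset.sum_le_sum fun i _ => hμ i d hd
    omega
  have hDC : ∀ d ∈ D, ∀ k, k ∈ C → (d.1 k : ℕ) ≤ μ k + Fintype.card I := by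
    intro d hd k hk
    have h1 : ∑ i ∈ C, (d.1 i : ℕ) ≤ ∑ i, (d.1 i : ℕ) :=
      Finset.sum_le_sum_of_subset (Finset.subset_univ _)
    rw [← Finset.add_sum_erase _ _ hk, d.2] at h1
    rw [← Finset.add_sum_erase _ _ hk] at hsum2
    have h2 : ∑ i ∈ C.erase k, μ i ≤ ∑ i ∈ C.erase k, (d.1 i : ℕ) :=
      Finset.sum_le_sum fun i _ => hμ i d hd
    omega
  have hz : ∀ i, ∃ d ∈ D, col (fun k => (d.1 k : ℕ)) = i ∨ (d.1 i : ℕ) ≤ Fintype.card I := by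
    intro i
    by_cases hi : i ∈ C
    · obtain ⟨d, hd, hdi⟩ := hcol' i ((hC i).1 hi)
      exact ⟨d, (hD d).2 hd, Or.inl hdi⟩
    · exact ⟨d0, (hD d0).2 hd0, Or.inr (hDsum d0 ((hD d0).2 hd0) i hi)⟩
  choose z hzD hz using hz
  refine ⟨fun i k => ((z i).1 k : ℕ), fun i => (z i).2, fun i j k => ?_, hz⟩
  by_cases hk : k ∈ C
  · have h1 := hDC (z i) (hzD i) k hk
    have h2 := hμ k (z j) (hzD j)
    simp only
    omega
  · have := hDsum (z i) (hzD i) k hk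
    simp only
    omega

open Filter Topology in
theorem brouwer {I : Type*} [Fintype I] [Nonempty I] (f : (I → ℝ) → (I → ℝ))
    (hf : ContinuousOn f (stdSimplex ℝ I)) (hmap : Set.MapsTo f (stdSimplex ℝ I) (stdSimplex ℝ I)) :
    ∃ x ∈ stdSimplex ℝ I, f x = x := by
  classical
  rcases subsingleton_or_nontrivial I with hI | hI
  · obtain ⟨i⟩ : Nonempty I := inferInstance
    have h1 := single_mem_stdSimplex ℝ i
    have h2 := hmap h1
    refine ⟨_, h1, ?_⟩
    have hu : (Finset.univ : Finset I) = {i} := by ext j; simp [Subsingleton.elim j i]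
    funext j
    rw [Subsingleton.elim j i]
    have h3 := h1.2
    have h4 := h2.2
    rw [hu, Finset.sum_singleton] at h3 h4
    rw [h3, h4]
  have hcol : ∀ x ∈ stdSimplex ℝ I, ∃ i, x i ≤ f x i := by
    intro x hx
    by_contra hcon
    push Not at hcon
    have := Finset.sum_lt_sum_of_nonempty Finset.univ_nonempty (fun i _ => hcon i)
    rw [hx.2, (hmap hx).2] at this
    exact lt_irrefl _ this
  set n : ℝ := (Fintype.card I : ℝ) with hn
  have step : ∀ N : ℕ, ∃ p : I → I → ℝ, (∀ i, p i ∈ stdSimplex ℝ I) ∧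
      (∀ i j k, p i k ≤ p j k + n / ((N : ℝ) + 1)) ∧
      ∀ i, p i i ≤ f (p i) i + n / ((N : ℝ) + 1) := by
    intro N
    have hN : (0 : ℝ) < (N : ℝ) + 1 := by positivity
    let sc : (I → ℕ) → I → ℝ := fun a k => (a k : ℝ) / ((N : ℝ) + 1)
    have hsc : ∀ a : I → ℕ, ∑ k, a k = N + 1 → sc a ∈ stdSimplex ℝ I := by
      intro a ha
      refine ⟨fun k => by positivity, ?_⟩
      simp only [sc]
      rw [← Finset.sum_div, div_eq_one_iff_eq hN.ne']
      exact_mod_cast ha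
    have hex : ∀ a : I → ℕ, ∃ i, ∑ k, a k = N + 1 → sc a i ≤ f (sc a) i := by
      intro a
      by_cases ha : ∑ k, a k = N + 1
      · obtain ⟨i, hi⟩ := hcol _ (hsc a ha)
        exact ⟨i, fun _ => hi⟩
      · exact ⟨Classical.arbitrary I, fun h => absurd h ha⟩
    choose col hcolor using hex
    obtain ⟨z, h1, h2, h3⟩ := grid (N + 1) col
    refine ⟨fun i => sc (z i), fun i => hsc _ (h1 i), fun i j k => ?_, fun i => ?_⟩
    · simp only [sc]
      rw [← add_div]
      gcongr
      rw [hn]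
      exact_mod_cast h2 i j k
    · have hnn : 0 ≤ n / ((N : ℝ) + 1) := by positivity
      rcases h3 i with h | h
      · have := hcolor (z i) (h1 i)
        rw [h] at this
        linarith
      · have h4 : 0 ≤ f (sc (z i)) i := (hmap (hsc _ (h1 i))).1 i
        have h5 : sc (z i) i ≤ n / ((N : ℝ) + 1) := by
          simp only [sc]
          gcongr
          rw [hn]
          exact_mod_cast h
        linarith
  choose p hp1 hp2 hp3 using step
  obtain ⟨i0⟩ : Nonempty I := inferInstance
  obtain ⟨x, hx, φ, hφ, hlim⟩ := (isCompact_stdSimplex (𝕜 := ℝ) (ι := I)).tendsto_subseq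
    (fun N => hp1 N i0)
  have hzero : Tendsto (fun N : ℕ => n / ((φ N : ℝ) + 1)) atTop (𝓝 0) := by
    have h1 : Tendsto (fun N : ℕ => n / ((N : ℝ) + 1)) atTop (𝓝 0) :=
      tendsto_const_nhds.div_atTop
        (tendsto_atTop_add_const_right _ _ tendsto_natCast_atTop_atTop)
    exact h1.comp hφ.tendsto_atTop
  have hlim' : ∀ i, Tendsto (fun N => p (φ N) i) atTop (𝓝 x) := by
    intro i
    rw [tendsto_pi_nhds] at hlim ⊢
    intro k
    have hk := hlim k
    have ha := hk.sub hzero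
    have hb := hk.add hzero
    rw [sub_zero] at ha
    rw [add_zero] at hb
    refine tendsto_of_tendsto_of_tendsto_of_le_of_le ha hb (fun N => ?_) (fun N => ?_)
    · have := hp2 (φ N) i0 i k
      simp only [Function.comp]
      linarith
    · exact hp2 (φ N) i i0 k
  refine ⟨x, hx, ?_⟩
  have hle : ∀ i, x i ≤ f x i := by
    intro i
    have h1 : Tendsto (fun N => f (p (φ N) i)) atTop (𝓝 (f x)) := by
      refine (hf x hx).tendsto.comp ?_
      exact tendsto_nhdsWithin_iff.2 ⟨hlim' i, Eventually.of_forall fun N => hp1 _ _⟩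
    have h2 := ((tendsto_pi_nhds.1 h1) i).add hzero
    rw [add_zero] at h2
    exact le_of_tendsto_of_tendsto' ((tendsto_pi_nhds.1 (hlim' i)) i) h2
      (fun N => hp3 (φ N) i)
  have hs : ∑ i, x i = ∑ i, f x i := by rw [hx.2, (hmap hx).2]
  have := (Finset.sum_eq_sum_iff_of_le (fun i _ => hle i)).1 hs
  funext i
  exact (this i (Finset.mem_univ i)).symm

open Filter Topology in
theorem schauder {E : Type*} [NormedAddCommGroup E] [NormedSpace ℝ E]
    (M C : Set E) (hM : M.Nonempty) (hconv : Convex ℝ M) (T : E → E) (hT : ContinuousOn T M)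
    (hC : IsCompact C) (hCM : C ⊆ M) (hTC : Set.MapsTo T M C) : ∃ x ∈ M, T x = x := by
  classical
  have step : ∀ ε : ℝ, 0 < ε → ∃ x ∈ M, ‖x - T x‖ ≤ ε := by
    intro ε hε
    obtain ⟨t, htC, htfin, hcov⟩ := hC.finite_cover_balls hε
    haveI : Fintype t := htfin.fintype
    let w : t → E → ℝ := fun i y => max 0 (ε - ‖y - i‖)
    have hw0 : ∀ i y, 0 ≤ w i y := fun i y => le_max_left _ _
    have hwc : ∀ i, Continuous (w i) := fun i => by simp only [w]; fun_prop
    have hwpos : ∀ y ∈ C, 0 < ∑ i, w i y := by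
      intro y hy
      obtain ⟨c, hc, hyc⟩ := Set.mem_iUnion₂.1 (hcov hy)
      apply Finset.sum_pos' (fun i _ => hw0 i y) ⟨⟨c, hc⟩, Finset.mem_univ _, ?_⟩
      simp only [w]
      rw [Metric.mem_ball, dist_eq_norm] at hyc
      exact lt_max_of_lt_right (by simpa using hyc)
    obtain ⟨m0, hm0⟩ := hM
    haveI : Nonempty t := by
      obtain ⟨c, hc, -⟩ := Set.mem_iUnion₂.1 (hcov (hTC hm0))
      exact ⟨⟨c, hc⟩⟩
    let b : (t → ℝ) → E := fun l => ∑ i, l i • (i : E)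
    have hb : Continuous b := by simp only [b]; fun_prop
    have hbM : ∀ l ∈ stdSimplex ℝ t, b l ∈ M := fun l hl =>
      hconv.sum_mem (fun i _ => hl.1 i) hl.2 (fun i _ => hCM (htC i.2))
    let g : (t → ℝ) → (t → ℝ) := fun l i => w i (T (b l)) / ∑ j, w j (T (b l))
    have hTb : ContinuousOn (fun l => T (b l)) (stdSimplex ℝ t) :=
      hT.comp hb.continuousOn hbM
    obtain ⟨l, hl, hgl⟩ := brouwer g
      (by
        refine continuousOn_pi.2 fun i => ?_
        refine ContinuousOn.div ((hwc i).comp_continuousOn hTb)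
          (continuousOn_finsetSum _ fun j _ => (hwc j).comp_continuousOn hTb) ?_
        intro l hl
        exact (hwpos _ (hTC (hbM l hl))).ne')
      (by
        intro l hl
        have hp := hwpos _ (hTC (hbM l hl))
        refine ⟨fun i => div_nonneg (hw0 _ _) hp.le, ?_⟩
        simp only [g]
        rw [← Finset.sum_div, div_self hp.ne'])
    refine ⟨b l, hbM l hl, ?_⟩
    have h1 : b l - T (b l) = ∑ i, l i • ((i : E) - T (b l)) := by
      simp only [smul_sub, Finset.sum_sub_distrib]
      rw [← Finset.sum_smul, hl.2, one_smul]
    calc ‖b l - T (b l)‖ = ‖∑ i, l i • ((i : E) - T (b l))‖ := by rw [← h1]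
      _ ≤ ∑ i, ‖l i • ((i : E) - T (b l))‖ := norm_sum_le _ _
      _ ≤ ∑ i, l i * ε := by
        refine Finset.sum_le_sum fun i _ => ?_
        rw [norm_smul, Real.norm_of_nonneg (hl.1 i)]
        by_cases h : ‖T (b l) - i‖ < ε
        · rw [norm_sub_rev]
          exact mul_le_mul_of_nonneg_left h.le (hl.1 i)
        · have hw : w i (T (b l)) = 0 := max_eq_left (by linarith)
          have : l i = 0 := by rw [← hgl]; simp only [g]; rw [hw, zero_div]
          rw [this]; simp
      _ = ε := by rw [← Finset.sum_mul, hl.2, one_mul]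
  choose x hxM hx using fun N : ℕ => step (1 / ((N : ℝ) + 1)) (by positivity)
  obtain ⟨z, hz, φ, hφ, hlim⟩ := hC.tendsto_subseq (fun N => hTC (hxM N))
  have h0 : Tendsto (fun N => x (φ N) - T (x (φ N))) atTop (𝓝 0) :=
    squeeze_zero_norm (fun N => hx (φ N))
      (tendsto_one_div_add_atTop_nhds_zero_nat.comp hφ.tendsto_atTop)
  have hxl : Tendsto (fun N => x (φ N)) atTop (𝓝 z) := by
    have := h0.add hlim
    simpa using this
  refine ⟨z, hCM hz, ?_⟩
  have h1 : Tendsto (fun N => T (x (φ N))) atTop (𝓝 (T z)) :=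
    (hT z (hCM hz)).tendsto.comp
      (tendsto_nhdsWithin_iff.2 ⟨hxl, Eventually.of_forall fun N => hxM _⟩)
  exact tendsto_nhds_unique h1 hlim

end KrasFP

/-- **Krasnoselskii fixed point theorem.** Let `M` be a nonempty closed convex subset of a
Banach space `E`, and `A B : M → E` maps such that `A x + B y ∈ M` for all `x y ∈ M`,
`A` is continuous on `M` with image contained in a compact set, and `B` is a contraction
on `M` with constant `κ < 1`. Then some `y ∈ M` satisfies `A y + B y = y`. -/
theorem krasnoselskii_fixed_point
    {E : Type*} [NormedAddCommGroup E] [NormedSpace ℝ E] [CompleteSpace E]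
    (M : Set E) (hM : M.Nonempty) (hMclosed : IsClosed M) (hMconv : Convex ℝ M)
    (A B : E → E) (κ : ℝ) (hκ : κ < 1)
    (hAB : ∀ x ∈ M, ∀ y ∈ M, A x + B y ∈ M)
    (hAcont : ContinuousOn A M)
    (hAcomp : ∃ K : Set E, IsCompact K ∧ A '' M ⊆ K)
    (hBcontr : ∀ x ∈ M, ∀ y ∈ M, ‖B x - B y‖ ≤ κ * ‖x - y‖) :
    ∃ y ∈ M, A y + B y = y := by
  obtain ⟨K, hK, hAK⟩ := hAcomp
  obtain ⟨q, hq⟩ : ∃ q : NNReal, q = κ.toNNReal := ⟨_, rfl⟩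
  have hq1 : q < 1 := by rw [hq, Real.toNNReal_lt_one]; exact hκ
  have hq1' : (q : ℝ) < 1 := by exact_mod_cast hq1
  have hB : ∀ x ∈ M, ∀ y ∈ M, ‖B x - B y‖ ≤ q * ‖x - y‖ := by
    intro x hx y hy
    refine (hBcontr x hx y hy).trans ?_
    gcongr
    rw [hq]
    exact Real.le_coe_toNNReal κ
  let W : Set E := {w | ∀ y ∈ M, w + B y ∈ M}
  have hW : IsClosed W := by
    have : W = ⋂ y ∈ M, (fun w => w + B y) ⁻¹' M := by ext w; simp [W]
    rw [this]
    exact isClosed_biInter fun y _ => hMclosed.preimage (by fun_prop)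
  have hS : ∀ w, ∃ z, w ∈ W → z ∈ M ∧ w + B z = z := by
    intro w
    by_cases hw : w ∈ W
    · have hmaps : Set.MapsTo (fun y => w + B y) M M := fun y hy => hw y hy
      have hcw : ContractingWith q (hmaps.restrict _ M M) := by
        refine ⟨hq1, LipschitzWith.of_dist_le_mul ?_⟩
        rintro ⟨x, hx⟩ ⟨y, hy⟩
        simp only [Subtype.dist_eq, Set.MapsTo.val_restrict_apply, dist_eq_norm]
        rw [add_sub_add_left_eq_sub]
        exact hB x hx y hy
      obtain ⟨m0, hm0⟩ := hM
      obtain ⟨z, hz, hzfix, -⟩ := ContractingWith.exists_fixedPoint' hMclosed.isComplete hmaps hcw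
        hm0 (edist_ne_top _ _)
      exact ⟨z, fun _ => ⟨hz, hzfix⟩⟩
    · exact ⟨0, fun h => absurd h hw⟩
  choose S hS using hS
  have hSc : ContinuousOn S W := by
    have hpos : 0 < 1 - (q : ℝ) := by linarith
    have : LipschitzOnWith (Real.toNNReal (1 - (q : ℝ))⁻¹) S W := by
      refine LipschitzOnWith.of_dist_le_mul fun v hv w hw => ?_
      rw [Real.coe_toNNReal _ (by positivity), dist_eq_norm, dist_eq_norm, inv_mul_eq_div,
        le_div_iff₀ hpos]
      have h1 := hB _ (hS v hv).1 _ (hS w hw).1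
      have h2 : S v - S w = (v - w) + (B (S v) - B (S w)) := by
        nth_rewrite 1 [← (hS v hv).2, ← (hS w hw).2]
        abel
      have h3 := norm_add_le (v - w) (B (S v) - B (S w))
      rw [← h2] at h3
      linarith
    exact this.continuousOn
  have hAW : Set.MapsTo A M W := fun x hx y hy => hAB x hx y hy
  obtain ⟨x, hx, hfix⟩ := KrasFP.schauder M (S '' (K ∩ W)) hM hMconv (fun x => S (A x))
    (hSc.comp hAcont hAW)
    ((hK.inter_right hW).image_of_continuousOn (hSc.mono Set.inter_subset_right))
    (by rintro _ ⟨w, hw, rfl⟩; exact (hS w hw.2).1)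
    (fun x hx => ⟨A x, ⟨hAK ⟨x, hx, rfl⟩, hAW hx⟩, rfl⟩)
  refine ⟨x, hx, ?_⟩
  have := (hS (A x) (hAW hx)).2
  rwa [hfix] at this
end

section
/- Let X and Y be Banach spaces, T > 0, and let K : (0,T] → B(Y,X) be a family of bounded linear operators from Y to X that is continuous in the operator norm on (0,T], such that each K(r) is a compact operator and ‖K(r)‖_{B(Y,X)} ≤ C_K r^{α−1} for all r ∈ (0,T], for some constants α ∈ (0,1] and C_K > 0. Then the operator B defined by (Bz)(t) = ∫₀ᵗ K(t−s) z(s) ds (Bochner integral) is a well-defined bounded linear operator from C([0,T];Y) to C([0,T];X), and B is a compact operator. -/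
open MeasureTheory

lemma kc_ascoli {S V X : Type*} [TopologicalSpace S] [CompactSpace S]
    [NormedAddCommGroup X] [NormedSpace ℝ X] [CompleteSpace X]
    [NormedAddCommGroup V] [NormedSpace ℝ V] (G : C(S, V →L[ℝ] X))
    (hG : ∀ t, IsCompactOperator (G t)) :
    ∃ B : V →L[ℝ] C(S, X), (∀ z t, B z t = G t z) ∧ IsCompactOperator B := by
  let B0 : V →ₗ[ℝ] C(S, X) :=
    { toFun := fun z => ⟨fun t => G t z, by fun_prop⟩
      map_add' := fun a b => by ext t; simp
      map_smul' := fun a b => by ext t; simp }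
  let B : V →L[ℝ] C(S, X) := B0.mkContinuous ‖G‖ (fun z => by
    rw [ContinuousMap.norm_le _ (by positivity)]
    intro t
    exact ((G t).le_opNorm z).trans (by gcongr; exact G.norm_coe_le_norm t))
  have hB : ∀ z t, B z t = G t z := fun z t => rfl
  refine ⟨B, hB, ?_⟩
  refine (isCompactOperator_iff_isCompact_closure_image_closedBall (B : V →ₗ[ℝ] C(S, X))
    one_pos).2 ?_
  haveI : T2Space (UniformOnFun S X {K | IsCompact K}) :=
    UniformOnFun.t2Space_of_covering (Set.eq_univ_iff_forall.mpr
      (fun x => Set.mem_sUnion_of_mem (Set.mem_singleton x) isCompact_singleton))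
  refine ArzelaAscoli.isCompact_closure_of_isClosedEmbedding (X := S) (α := X)
    (F := fun f : C(S, X) => (f : S → X))
    (𝔖 := {K | IsCompact K}) (fun K hK => hK)
    (ContinuousMap.isUniformEmbedding_toUniformOnFunIsCompact.isClosedEmbedding) ?_ ?_
  · intro K _
    refine Equicontinuous.equicontinuousOn ?_ K
    intro t
    rw [Metric.equicontinuousAt_iff_right]
    intro ε hε
    have := (Metric.continuous_iff'.1 G.continuous) t ε hε
    filter_upwards [this] with t' ht' 
    rintro ⟨_, z, hz, rfl⟩
    have hz' : ‖z‖ ≤ 1 := by simpa using hz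
    change dist (G t z) (G t' z) < ε
    rw [dist_eq_norm, ← sub_apply]
    rw [dist_comm, dist_eq_norm] at ht'
    calc _ ≤ ‖G t - G t'‖ * ‖z‖ := ContinuousLinearMap.le_opNorm _ _
      _ ≤ ‖G t - G t'‖ * 1 := by gcongr
      _ < ε := by simpa using ht'
  · intro K _ t _
    obtain ⟨Q, hQ, hQ'⟩ := IsCompactOperator.image_closedBall_subset_compact
      (f := ((G t : V →L[ℝ] X) : V →ₗ[ℝ] X)) (hG t) 1
    refine ⟨Q, hQ, ?_⟩
    rintro _ ⟨z, hz, rfl⟩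
    exact hQ' ⟨z, hz, rfl⟩

section
variable {X Y : Type*} [NormedAddCommGroup X] [NormedSpace ℝ X]
    [NormedAddCommGroup Y] [NormedSpace ℝ Y] {T : ℝ}

lemma kc_int (hT : 0 ≤ T) {f : ℝ → Y →L[ℝ] X} (hf : Integrable f)
    (z : C(Set.Icc (0:ℝ) T, Y)) :
    Integrable (fun s => f s (z (Set.projIcc 0 T hT s))) := by
  have hc : Continuous fun s => z (Set.projIcc 0 T hT s) :=
    z.continuous.comp continuous_projIcc
  refine Integrable.mono' (hf.norm.mul_const ‖z‖) ?_ ?_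
  · have h := hf.1.prodMk (hc.aestronglyMeasurable (μ := volume))
    exact (ContinuousLinearMap.apply ℝ X).flip.continuous₂.comp_aestronglyMeasurable h
  · refine .of_forall fun s => ((f s).le_opNorm _).trans ?_
    gcongr
    exact z.norm_coe_le_norm _

open Classical in
noncomputable def kcPhi (hT : 0 ≤ T) (f : ℝ → Y →L[ℝ] X) : C(Set.Icc (0:ℝ) T, Y) →L[ℝ] X :=
  if hf : Integrable f then
  LinearMap.mkContinuous
    { toFun := fun z => ∫ s in Set.Ioc 0 T, f s (z (Set.projIcc 0 T hT s))
      map_add' := fun a b => by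
        simp only [ContinuousMap.add_apply, map_add]
        exact integral_add (kc_int hT hf a).integrableOn (kc_int hT hf b).integrableOn
      map_smul' := fun c a => by
        simp only [ContinuousMap.smul_apply, map_smul, RingHom.id_apply]
        exact integral_smul c _ } (∫ s, ‖f s‖) (fun z => by
      refine (norm_integral_le_integral_norm _).trans ?_
      refine (setIntegral_le_integral (kc_int hT hf z).norm
        (.of_forall fun _ => norm_nonneg _)).trans ?_
      rw [← integral_mul_const]
      refine integral_mono (kc_int hT hf z).norm (hf.norm.mul_const _) fun s => ?_
      refine ((f s).le_opNorm _).trans ?_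
      gcongr
      exact z.norm_coe_le_norm _)
  else 0

lemma kcPhi_apply (hT : 0 ≤ T) {f : ℝ → Y →L[ℝ] X} (hf : Integrable f)
    (z : C(Set.Icc (0:ℝ) T, Y)) :
    kcPhi hT f z = ∫ s in Set.Ioc 0 T, f s (z (Set.projIcc 0 T hT s)) := by
  rw [kcPhi, dif_pos hf]; rfl

lemma kcPhi_norm (hT : 0 ≤ T) {f : ℝ → Y →L[ℝ] X} (hf : Integrable f) :
    ‖kcPhi hT f‖ ≤ ∫ s, ‖f s‖ := by
  rw [kcPhi, dif_pos hf]
  exact LinearMap.mkContinuous_norm_le _ (integral_nonneg fun _ => norm_nonneg _) _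

lemma kcPhi_congr (hT : 0 ≤ T) {f g : ℝ → Y →L[ℝ] X} (hf : Integrable f) (h : f =ᵐ[volume] g) :
    kcPhi hT f = kcPhi hT g := by
  ext z
  rw [kcPhi_apply hT hf, kcPhi_apply hT (hf.congr h)]
  refine integral_congr_ae (ae_restrict_of_ae ?_)
  filter_upwards [h] with s hs
  rw [hs]

lemma kcPhi_add (hT : 0 ≤ T) {f g : ℝ → Y →L[ℝ] X} (hf : Integrable f) (hg : Integrable g) :
    kcPhi hT (f + g) = kcPhi hT f + kcPhi hT g := by
  ext z
  have hfg : Integrable (f + g) := by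
    have := hf.sub hg.neg
    rwa [sub_neg_eq_add] at this
  rw [add_apply, kcPhi_apply hT hf, kcPhi_apply hT hg, kcPhi_apply hT hfg]
  exact integral_add (kc_int hT hf z).integrableOn (kc_int hT hg z).integrableOn

lemma kcPhi_sub (hT : 0 ≤ T) {f g : ℝ → Y →L[ℝ] X} (hf : Integrable f) (hg : Integrable g) :
    kcPhi hT (f - g) = kcPhi hT f - kcPhi hT g := by
  ext z
  rw [sub_apply, kcPhi_apply hT hf, kcPhi_apply hT hg, kcPhi_apply hT (hf.sub hg)]
  exact integral_sub (kc_int hT hf z).integrableOn (kc_int hT hg z).integrableOn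


variable {E : Type*} [NormedAddCommGroup E] [NormedSpace ℝ E] (L : E →L[ℝ] (Y →L[ℝ] X))

lemma kc_coe_int {f : ℝ → E} (hf : Integrable f) : Integrable (fun s => L (f s)) :=
  L.integrable_comp hf

lemma kcPhi_cont (hT : 0 ≤ T) (hL : ∀ e, ‖L e‖ ≤ ‖e‖) :
    Continuous (fun f : ℝ →₁[volume] E => kcPhi hT (fun s => L (f s))) := by
  suffices h : LipschitzWith 1
      (fun f : ℝ →₁[volume] E => kcPhi hT (fun s => L (f s))) from h.continuous
  refine LipschitzWith.of_dist_le_mul fun f g => ?_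
  have hf := kc_coe_int L (L1.integrable_coeFn f)
  have hg := kc_coe_int L (L1.integrable_coeFn g)
  rw [dist_eq_norm, dist_eq_norm, ← kcPhi_sub hT hf hg, L1.norm_eq_integral_norm,
    NNReal.coe_one, one_mul]
  refine (kcPhi_norm hT (hf.sub hg)).trans (integral_mono_ae (hf.sub hg).norm
    (L1.integrable_coeFn (f - g)).norm ?_)
  filter_upwards [Lp.coeFn_sub f g] with s hs
  simp only [hs, Pi.sub_apply, ← map_sub]
  exact hL _

lemma kcPhi_compact [CompleteSpace X] (hT : 0 ≤ T) (hL : ∀ e, ‖L e‖ ≤ ‖e‖)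
    (hLc : ∀ e, IsCompactOperator (L e)) {f : ℝ → E} (hf : Integrable f) :
    IsCompactOperator (kcPhi hT (fun s => L (f s))) := by
  refine Integrable.induction
    (P := fun f : ℝ → E => IsCompactOperator (kcPhi hT (fun s => L (f s))))
    ?_ ?_ ?_ ?_ hf
  · intro c A hA hAf
    have hi : Integrable (A.indicator fun _ => c) :=
      (integrable_indicator_iff hA).2 (integrableOn_const hAf.ne)
    have hi' := kc_coe_int L hi
    set D := A ∩ Set.Ioc 0 T
    have hform : ∀ z, kcPhi hT (fun s => L (A.indicator (fun _ => c) s)) z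
        = ∫ s in D, L c (z (Set.projIcc 0 T hT s)) := by
      intro z
      rw [kcPhi_apply hT hi', ← Measure.restrict_restrict hA, ← integral_indicator hA]
      congr 1; ext s
      by_cases h : s ∈ A <;> simp [h]
    have hDf : volume D ≠ ⊤ := ((measure_mono Set.inter_subset_left).trans_lt hAf).ne
    set Q := closure (L c '' Metric.closedBall 0 1)
    have hQ : IsCompact Q := IsCompactOperator.isCompact_closure_image_closedBall
      (f := (L c : Y →ₗ[ℝ] X)) (hLc c) 1
    have hQc : Convex ℝ Q := ((convex_closedBall (0:Y) 1).linear_image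
      (L c : Y →ₗ[ℝ] X)).closure
    have h0Q : (0:X) ∈ Q := subset_closure ⟨0, by simp, by simp⟩
    refine (isCompactOperator_iff_image_closedBall_subset_compact
      ((kcPhi hT (fun s => L (A.indicator (fun _ => c) s)) :
        C(Set.Icc (0:ℝ) T, Y) →L[ℝ] X) : C(Set.Icc (0:ℝ) T, Y) →ₗ[ℝ] X) one_pos).2 ?_
    refine ⟨(fun x => volume.real D • x) '' Q, hQ.image (continuous_const_smul _), ?_⟩
    rintro _ ⟨z, hz, rfl⟩
    have hz' : ‖z‖ ≤ 1 := by simpa using hz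
    rw [ContinuousLinearMap.coe_coe, hform]
    by_cases hD0 : volume D = 0
    · exact ⟨0, h0Q, by simp [Measure.restrict_eq_zero.2 hD0]⟩
    · refine ⟨⨍ s in D, L c (z (Set.projIcc 0 T hT s)), ?_, ?_⟩
      · refine hQc.set_average_mem isClosed_closure hD0 hDf (.of_forall fun s => ?_) ?_
        · refine subset_closure ⟨_, ?_, rfl⟩
          simpa using (z.norm_coe_le_norm _).trans hz'
        · have := (kc_int hT hi' z).integrableOn (s := D)
          refine this.congr_fun ?_ (hA.inter measurableSet_Ioc)
          intro s hs
          simp [hs.1]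
      · exact measure_smul_setAverage _ hDf
  · intro f g _ hf hg h1 h2
    have : (fun s => L ((f + g) s)) = (fun s => L (f s)) + (fun s => L (g s)) := by
      ext s; simp
    rw [this, kcPhi_add hT (kc_coe_int L hf) (kc_coe_int L hg)]
    exact h1.add h2
  · exact isClosed_setOfPred_isCompactOperator.preimage (kcPhi_cont L hT hL)
  · intro f g hfg hf h
    rwa [← kcPhi_congr hT (kc_coe_int L hf) (hfg.mono fun s hs => by simp only [hs])]

lemma kc_translate {k : ℝ → E} (hki : Integrable k) :
    Continuous fun t : ℝ => (hki.comp_sub_left t).toL1 := by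
  have hh : Integrable (fun s => k (-s)) := hki.comp_neg
  let h1 : ℝ →₁[volume] E := hh.toL1
  have : (fun t : ℝ => (hki.comp_sub_left t).toL1) = fun t : ℝ => (DomAddAct.mk (-t)) +ᵥ h1 := by
    funext t
    refine Eq.trans ?_ (DomAddAct.mk_vadd_toLp (-t) (memLp_one_iff_integrable.2 hh)).symm
    refine (MemLp.toLp_eq_toLp_iff _ _).2 (.of_forall fun s => ?_)
    simp [sub_eq_add_neg, add_comm]
  rw [this]
  have h3 : Continuous fun t : ℝ => DomAddAct.mk (-t) :=
    DomAddAct.continuous_mk.comp continuous_neg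
  haveI : Fact ((1:ENNReal) ≠ ⊤) := ⟨ENNReal.one_ne_top⟩
  exact h3.vadd continuous_const

lemma kc_main [CompleteSpace X] (hT : 0 ≤ T) (hL : ∀ e, ‖L e‖ ≤ ‖e‖)
    (hLc : ∀ e, IsCompactOperator (L e)) {k : ℝ → E} (hki : Integrable k) :
    ∃ B : C(Set.Icc (0:ℝ) T, Y) →L[ℝ] C(Set.Icc (0:ℝ) T, X),
      (∀ z : C(Set.Icc (0:ℝ) T, Y), ∀ t : Set.Icc (0:ℝ) T,
        B z t = ∫ s in Set.Ioc (0:ℝ) T, L (k (t - s)) (z (Set.projIcc 0 T hT s))) ∧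
      IsCompactOperator B := by
  let g : ℝ → (ℝ →₁[volume] E) := fun t => (hki.comp_sub_left t).toL1
  have hg : Continuous g := kc_translate hki
  have hgk : ∀ t, kcPhi hT (fun s => L (g t s)) =
      kcPhi hT (fun s => L (k (t - s))) := fun t =>
    kcPhi_congr hT (kc_coe_int L (L1.integrable_coeFn _))
      ((hki.comp_sub_left t).coeFn_toL1.mono fun s hs => by simp only [g, hs])
  let G : C(Set.Icc (0:ℝ) T, C(Set.Icc (0:ℝ) T, Y) →L[ℝ] X) :=
    ⟨fun t => kcPhi hT (fun s => L (g t s)),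
      (kcPhi_cont L hT hL).comp (hg.comp continuous_subtype_val)⟩
  obtain ⟨B, hB, hBc⟩ := kc_ascoli G
    (fun t => kcPhi_compact L hT hL hLc (L1.integrable_coeFn (g t)))
  refine ⟨B, fun z t => ?_, hBc⟩
  rw [hB]
  change kcPhi hT (fun s => L (g t s)) z = _
  rw [hgk, kcPhi_apply hT (kc_coe_int L (hki.comp_sub_left t))]

end


/-- **Proposition 2 (general kernel form).** If `K : (0,T] → B(Y,X)` is operator-norm
continuous, each `K(r)` is compact, and `‖K(r)‖ ≤ C_K r^(α−1)` with `α ∈ (0,1]`, then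
`(Bz)(t) = ∫₀ᵗ K(t−s) z(s) ds` is a well-defined bounded linear operator from
`C([0,T];Y)` to `C([0,T];X)`, and it is a compact operator. -/
theorem kernel_convolution_operator_compact
    {X Y : Type*} [NormedAddCommGroup X] [NormedSpace ℝ X] [CompleteSpace X]
    [NormedAddCommGroup Y] [NormedSpace ℝ Y]
    (T : ℝ) (hT : 0 < T)
    (α CK : ℝ) (hα : α ∈ Set.Ioc (0:ℝ) 1) (hCK : 0 < CK)
    (K : ℝ → Y →L[ℝ] X)
    (hKcont : ContinuousOn K (Set.Ioc 0 T))
    (hKcompact : ∀ r ∈ Set.Ioc (0:ℝ) T, IsCompactOperator (K r))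
    (hKbound : ∀ r ∈ Set.Ioc (0:ℝ) T, ‖K r‖ ≤ CK * r ^ (α - 1)) :
    ∃ B : C(Set.Icc (0:ℝ) T, Y) →L[ℝ] C(Set.Icc (0:ℝ) T, X),
      (∀ z : C(Set.Icc (0:ℝ) T, Y), ∀ t : Set.Icc (0:ℝ) T,
        B z t = ∫ s in (0:ℝ)..(t : ℝ), K ((t : ℝ) - s) (z (Set.projIcc 0 T hT.le s))) ∧
      IsCompactOperator B := by
  classical
  let E := (compactOperator (RingHom.id ℝ) Y X)
  letI : NormedAddCommGroup E := Submodule.normedAddCommGroup E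
  letI : NormedSpace ℝ E := Submodule.normedSpace E
  let k : ℝ → E := fun r => if h : r ∈ Set.Ioc 0 T then ⟨K r, hKcompact r h⟩ else 0
  have hk1 : ∀ r ∈ Set.Ioc 0 T, (k r : Y →L[ℝ] X) = K r := fun r h => by
    simp only [k, dif_pos h]
  have hk0 : ∀ r ∉ Set.Ioc 0 T, k r = 0 := fun r h => by
    simp only [k, dif_neg h]
  have hkc : ContinuousOn k (Set.Ioc 0 T) := by
    rw [Topology.IsInducing.subtypeVal.continuousOn_iff]
    exact hKcont.congr hk1
  have hki : Integrable k := by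
    have h1 : IntegrableOn (fun r : ℝ => CK * r ^ (α - 1)) (Set.Ioc 0 T) := by
      have := (intervalIntegral.intervalIntegrable_rpow' (a := 0) (b := T) (r := α - 1)
        (by linarith [hα.1])).const_mul CK
      rwa [intervalIntegrable_iff_integrableOn_Ioc_of_le hT.le] at this
    have h2 : IntegrableOn k (Set.Ioc 0 T) := by
      refine Integrable.mono' h1 (hkc.aestronglyMeasurable measurableSet_Ioc) ?_
      refine (ae_restrict_iff' measurableSet_Ioc).2 (.of_forall fun r hr => ?_)
      have := hKbound r hr
      rwa [← hk1 r hr] at this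
    refine (integrableOn_iff_integrable_of_support_subset ?_).1 h2
    intro r hr
    by_contra h
    exact hr (hk0 r h)
  obtain ⟨B, hB, hBc⟩ := kc_main (E := E) E.subtypeL hT.le (fun e => le_rfl) (fun e => e.2) hki
  refine ⟨B, fun z t => ?_, hBc⟩
  rw [hB, intervalIntegral.integral_of_le t.2.1, integral_Ioc_eq_integral_Ioo (y := (t:ℝ))]
  rw [← integral_indicator measurableSet_Ioc, ← integral_indicator measurableSet_Ioo]
  congr 1
  ext s
  by_cases hs : s ∈ Set.Ioo (0:ℝ) t
  · have h1 : s ∈ Set.Ioc 0 T := ⟨hs.1, hs.2.le.trans t.2.2⟩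
    have h2 : (t:ℝ) - s ∈ Set.Ioc 0 T := ⟨by linarith [hs.2], by linarith [hs.1, t.2.2]⟩
    rw [Set.indicator_of_mem hs, Set.indicator_of_mem h1, Submodule.subtypeL_apply, hk1 _ h2]
  · rw [Set.indicator_of_notMem hs]
    by_cases h1 : s ∈ Set.Ioc 0 T
    · have h2 : (t:ℝ) - s ∉ Set.Ioc 0 T := fun h => hs ⟨h1.1, by linarith [h.1]⟩
      rw [Set.indicator_of_mem h1, hk0 _ h2, map_zero, zero_apply]
    · rw [Set.indicator_of_notMem h1]
end
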